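/- The reduction of f_δ modulo 47 factors in (ℤ/47ℤ)[X] as 21·(X + 44)·(X² + 34X + 39)·g(X), where g(X) = X^13 + 4X^12 + X^11 + 41X^10 + 12X^9 + 21X^8 + 24X^7 + 32X^5 + 22X^4 + 10X^3 + 24X^2 + 18X + 13; moreover X² + 34X + 39 and g are irreducible over ℤ/47ℤ (so the factorization type is 1 + 2 + 13, giving a permutation of type 2 + 13). -/

import Mathlib

open Polynomial in
/-- The degree-16 integer polynomial `f_δ` whose root in [0.167, 0.169] is the
optimal value of δ. -/
noncomputable def fdelta : Polynomial ℤ :=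
  589824 * X ^ 16 - 7077888 * X ^ 15 + 41189376 * X ^ 14 - 154386432 * X ^ 13 +
    416788480 * X ^ 12 - 857112576 * X ^ 11 + 1383417856 * X ^ 10 - 1779354624 * X ^ 9 +
    1834437632 * X ^ 8 - 1514108928 * X ^ 7 + 992782336 * X ^ 6 - 509312064 * X ^ 5 +
    199354208 * X ^ 4 - 57160752 * X ^ 3 + 11200088 * X ^ 2 - 1313928 * X + 67417

open Polynomial

/-- The irreducible degree-13 factor of `f_δ` modulo 47. -/
noncomputable def g47 : Polynomial (ZMod 47) :=
  X ^ 13 + 4 * X ^ 12 + X ^ 11 + 41 * X ^ 10 + 12 * X ^ 9 + 21 * X ^ 8 + 24 * X ^ 7 +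
    32 * X ^ 5 + 22 * X ^ 4 + 10 * X ^ 3 + 24 * X ^ 2 + 18 * X + 13


/-- Value at `x` of the polynomial whose coefficient list is given, low degree first. -/
def evalL {R : Type} [CommRing R] (x : R) : List ℕ → R
  | [] => 0
  | a :: l => (a : R) + x * evalL x l

/-- Coefficientwise addition. -/
def addL : List ℕ → List ℕ → List ℕ
  | [], m => m
  | a :: l, [] => a :: l
  | a :: l, b :: m => (a + b) :: addL l m

/-- Scalar multiplication. -/
def smulL (c : ℕ) : List ℕ → List ℕ
  | [] => []
  | a :: l => (c * a) :: smulL c l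

/-- Prepend a coefficient, dropping zeros at the top. -/
def consL : ℕ → List ℕ → List ℕ
  | 0, [] => []
  | a, l => a :: l

/-- Reduce the coefficients modulo 47 and drop zeros at the top. -/
def normL : List ℕ → List ℕ
  | [] => []
  | a :: l => consL (a % 47) (normL l)

/-- The coefficients of `g47`. -/
def gL : List ℕ := [13, 18, 24, 10, 22, 32, 0, 24, 21, 12, 41, 1, 4, 1]

/-- Reduction step modulo `g47`, removing the coefficient of degree 13. -/
def redL (l : List ℕ) : List ℕ := normL (addL l (smulL (46 * l.getD 13 0) gL))

/-- Horner multiplication modulo `g47`. -/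
def mulL (m : List ℕ) : List ℕ → List ℕ
  | [] => []
  | a :: l => redL (addL (smulL a m) (0 :: mulL m l))

/-- The 47-th power modulo `g47`. -/
def powL (y : List ℕ) : List ℕ :=
  let y5 := mulL y (mulL (mulL y y) (mulL y y))
  let y11 := mulL y (mulL y5 y5)
  let y23 := mulL y (mulL y11 y11)
  mulL y (mulL y23 y23)

section
variable {R : Type} [CommRing R]

theorem evalL_addL (x : R) (l m : List ℕ) : evalL x (addL l m) = evalL x l + evalL x m := by
  induction l generalizing m with
  | nil => simp [addL, evalL]
  | cons a l ih =>
    cases m with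
    | nil => simp [addL, evalL]
    | cons b m => simp only [addL, evalL, ih]; push_cast; ring

theorem evalL_smulL (x : R) (c : ℕ) (l : List ℕ) : evalL x (smulL c l) = c * evalL x l := by
  induction l with
  | nil => simp [smulL, evalL]
  | cons a l ih => simp only [smulL, evalL, ih]; push_cast; ring

theorem evalL_consL (x : R) (a : ℕ) (l : List ℕ) : evalL x (consL a l) = a + x * evalL x l := by
  unfold consL
  split <;> simp [evalL]

theorem cast_mod47 (h47 : (47 : R) = 0) (a : ℕ) : ((a % 47 : ℕ) : R) = a := by
  conv_rhs => rw [← Nat.mod_add_div a 47]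
  push_cast
  rw [h47]; ring

theorem evalL_normL (h47 : (47 : R) = 0) (x : R) (l : List ℕ) :
    evalL x (normL l) = evalL x l := by
  induction l with
  | nil => rfl
  | cons a l ih => simp only [normL, evalL, evalL_consL, ih, cast_mod47 h47]

theorem evalL_redL (h47 : (47 : R) = 0) (x : R) (hx : evalL x gL = 0) (l : List ℕ) :
    evalL x (redL l) = evalL x l := by
  simp only [redL, evalL_normL h47, evalL_addL, evalL_smulL, hx, mul_zero, add_zero]

theorem evalL_mulL (h47 : (47 : R) = 0) (x : R) (hx : evalL x gL = 0) (m l : List ℕ) :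
    evalL x (mulL m l) = evalL x m * evalL x l := by
  induction l with
  | nil => simp [mulL, evalL]
  | cons a l ih =>
    simp only [mulL, evalL_redL h47 x hx, evalL_addL, evalL_smulL, evalL, ih]
    push_cast; ring

theorem step47 (h47 : (47 : R) = 0) (x : R) (hx : evalL x gL = 0) (y z : List ℕ)
    (h : powL y = z) : evalL x y ^ 47 = evalL x z := by
  rw [← h]
  simp only [powL, evalL_mulL h47 x hx]
  ring

/-- A root of `g47` in characteristic 47 is fixed by the 13-th power of Frobenius. -/
theorem root_frob (h47 : (47 : R) = 0) (x : R) (hx : evalL x gL = 0) :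
    x ^ 47 ^ 13 = x := by
  have s0 : x ^ 47 ^ 0 = evalL x [0, 1] := by simp [evalL]
  have s1 : x ^ 47 ^ 1 = evalL x [31, 16, 22, 39, 43, 3, 18, 1, 0, 45, 39, 44, 39] := by
    rw [pow_succ, pow_mul, s0]
    exact step47 h47 x hx _ _ (by decide +kernel)
  have s2 : x ^ 47 ^ 2 = evalL x [6, 22, 41, 9, 5, 39, 36, 27, 18, 24, 41, 2, 20] := by
    rw [pow_succ, pow_mul, s1]
    exact step47 h47 x hx _ _ (by decide +kernel)
  have s3 : x ^ 47 ^ 3 = evalL x [24, 15, 37, 3, 18, 26, 19, 2, 2, 1, 18, 39, 8] := by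
    rw [pow_succ, pow_mul, s2]
    exact step47 h47 x hx _ _ (by decide +kernel)
  have s4 : x ^ 47 ^ 4 = evalL x [25, 17, 6, 42, 30, 25, 34, 38, 28, 45, 19, 8, 46] := by
    rw [pow_succ, pow_mul, s3]
    exact step47 h47 x hx _ _ (by decide +kernel)
  have s5 : x ^ 47 ^ 5 = evalL x [26, 35, 22, 1, 27, 26, 39, 7, 6, 10, 31, 2, 24] := by
    rw [pow_succ, pow_mul, s4]
    exact step47 h47 x hx _ _ (by decide +kernel)
  have s6 : x ^ 47 ^ 6 = evalL x [2, 30, 31, 2, 31, 5, 3, 10, 31, 36, 22, 44, 26] := by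
    rw [pow_succ, pow_mul, s5]
    exact step47 h47 x hx _ _ (by decide +kernel)
  have s7 : x ^ 47 ^ 7 = evalL x [43, 21, 24, 41, 5, 24, 41, 45, 21, 24, 11, 13, 34] := by
    rw [pow_succ, pow_mul, s6]
    exact step47 h47 x hx _ _ (by decide +kernel)
  have s8 : x ^ 47 ^ 8 = evalL x [31, 10, 44, 37, 11, 29, 21, 38, 15, 15, 12, 38, 32] := by
    rw [pow_succ, pow_mul, s7]
    exact step47 h47 x hx _ _ (by decide +kernel)
  have s9 : x ^ 47 ^ 9 = evalL x [46, 42, 2, 11, 32, 45, 7, 10, 15, 29, 1, 2, 20] := by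
    rw [pow_succ, pow_mul, s8]
    exact step47 h47 x hx _ _ (by decide +kernel)
  have s10 : x ^ 47 ^ 10 = evalL x [45, 24, 32, 23, 22, 19, 9, 16, 9, 1, 43, 11, 7] := by
    rw [pow_succ, pow_mul, s9]
    exact step47 h47 x hx _ _ (by decide +kernel)
  have s11 : x ^ 47 ^ 11 = evalL x [20, 38, 5, 37, 1, 26, 43, 6, 9, 12, 3, 46, 42] := by
    rw [pow_succ, pow_mul, s10]
    exact step47 h47 x hx _ _ (by decide +kernel)
  have s12 : x ^ 47 ^ 12 = evalL x [26, 11, 16, 37, 10, 15, 12, 35, 34, 40, 42, 33, 31] := by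
    rw [pow_succ, pow_mul, s11]
    exact step47 h47 x hx _ _ (by decide +kernel)
  have s13 : x ^ 47 ^ 13 = evalL x [0, 1] := by
    rw [pow_succ, pow_mul, s12]
    exact step47 h47 x hx _ _ (by decide +kernel)
  rw [s13]
  simp [evalL]

end

theorem poly47 : (47 : (ZMod 47)[X]) = 0 := by
  have h : (47 : ZMod 47) = 0 := by decide
  have h2 : (C 47 : (ZMod 47)[X]) = C 0 := by rw [h]
  rwa [map_ofNat, map_zero] at h2

theorem g47_dvd : g47 ∣ X ^ Nat.card (ZMod 47) ^ 13 - X := by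
  rw [Nat.card_zmod]
  have h47 : (47 : AdjoinRoot g47) = 0 := by
    have h := congrArg (AdjoinRoot.mk g47) poly47
    rwa [map_ofNat, map_zero] at h
  rw [← AdjoinRoot.mk_eq_zero, map_sub, map_pow, AdjoinRoot.mk_X, sub_eq_zero]
  apply root_frob h47
  have h : AdjoinRoot.mk g47 g47 = 0 := AdjoinRoot.mk_self
  conv at h => lhs; arg 2; rw [g47]
  simp only [map_add, map_mul, map_pow, AdjoinRoot.mk_X, map_ofNat] at h
  rw [← h]
  simp only [gL, evalL]
  push_cast
  ring

theorem g47_no_root (a : ZMod 47) : g47.eval a ≠ 0 := by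
  simp only [g47, eval_add, eval_mul, eval_pow, eval_X, eval_ofNat]
  revert a
  decide +kernel

theorem g47_natDegree : g47.natDegree = 13 := by
  unfold g47
  compute_degree!

theorem g47_irreducible : Irreducible g47 := by
  have : Fact (Nat.Prime 47) := ⟨by norm_num⟩
  have hpos : g47.natDegree ≠ 0 := by rw [g47_natDegree]; norm_num
  have hne : g47 ≠ 0 := by
    intro h
    rw [h] at hpos
    simp at hpos
  obtain ⟨p, hp, hpg⟩ := exists_irreducible_of_natDegree_ne_zero hpos
  have hdvd : p.natDegree ∣ 13 :=
    hp.natDegree_dvd_of_dvd_X_pow_card_pow_sub_X (hpg.trans g47_dvd)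
  rcases (Nat.dvd_prime (by norm_num)).1 hdvd with h1 | h13
  · obtain ⟨a, ha⟩ := exists_root_of_degree_eq_one
      ((degree_eq_iff_natDegree_eq_of_pos one_pos).2 h1)
    exact absurd (ha.dvd hpg) (g47_no_root a)
  · have : Associated p g47 := associated_of_dvd_of_natDegree_le hpg hne
      (by rw [h13, g47_natDegree])
    exact this.irreducible hp

theorem quad_no_root : ∀ a : ZMod 47, ¬a ^ 2 + 34 * a + 39 = 0 := by
  decide +kernel

theorem quad_irreducible : Irreducible (X ^ 2 + 34 * X + C 39 : Polynomial (ZMod 47)) := by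
  have : Fact (Nat.Prime 47) := ⟨by norm_num⟩
  have hd : (X ^ 2 + 34 * X + C 39 : Polynomial (ZMod 47)).natDegree = 2 := by
    compute_degree!
  apply irreducible_of_degree_le_three_of_not_isRoot
  · rw [hd]; decide
  · intro a
    simp only [IsRoot.def, eval_add, eval_mul, eval_pow, eval_X, eval_ofNat, eval_C]
    exact quad_no_root a

theorem fdelta_factor : fdelta.map (Int.castRingHom (ZMod 47)) =
    C 21 * (X + C 44) * (X ^ 2 + 34 * X + C 39) * g47 := by
  have h21 : (C 21 : (ZMod 47)[X]) = 21 := rfl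
  have h44 : (C 44 : (ZMod 47)[X]) = 44 := rfl
  have h39 : (C 39 : (ZMod 47)[X]) = 39 := rfl
  rw [h21, h44, h39]
  simp only [fdelta, g47, Polynomial.map_add, Polynomial.map_sub, Polynomial.map_mul,
    Polynomial.map_pow, Polynomial.map_X, Polynomial.map_ofNat]
  linear_combination ((-8533) * X ^ 0 + (-50673) * X ^ 1 + (207100) * X ^ 2 + (-1240947) * X ^ 3 +
    (4217008) * X ^ 4 + (-10876410) * X ^ 5 + (21100310) * X ^ 6 + (-32234610) * X ^ 7 +
    (38998012) * X ^ 8 + (-37883049) * X ^ 9 + (29394014) * X ^ 10 + (-18265752) * X ^ 11 +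
    (8862653) * X ^ 12 + (-3288381) * X ^ 13 + (875544) * X ^ 14 + (-150630) * X ^ 15 +
    (12549) * X ^ 16) * poly47

/-- The reduction of `f_δ` modulo 47 factors as
`21 · (X + 44) · (X² + 34X + 39) · g` with `X² + 34X + 39` and `g` irreducible over
ℤ/47ℤ, i.e. the factorization type is 1 + 2 + 13 (a permutation of type 2 + 13). -/
theorem fdelta_mod_47_factorization :
    fdelta.map (Int.castRingHom (ZMod 47)) =
        C 21 * (X + C 44) * (X ^ 2 + 34 * X + C 39) * g47 ∧
      Irreducible (X ^ 2 + 34 * X + C 39 : Polynomial (ZMod 47)) ∧ Irreducible g47 := by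
  exact ⟨fdelta_factor, quad_irreducible, g47_irreducible⟩
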